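/- Strong completeness of ELF: for every formula φ and every set Φ of formulas of the language ELF, if Φ semantically entails φ over similarity models (every pointed similarity model satisfying all formulas of Φ satisfies φ), then Φ ⊢_ELF φ (i.e., there is a finite subset {ψ_1,…,ψ_n} ⊆ Φ such that (ψ_1 ∧ … ∧ ψ_n) → φ is a theorem of ELF). -/

import Mathlib

/-- Formulas of the language ELF over a set `Ag` of agents, with
propositional variables drawn from the countably infinite set `ℕ`.  Groups
are nonempty finite sets of agents. -/
inductive Formula (Ag : Type) : Type
  | atom : ℕ → Formula Ag
  | neg  : Formula Ag → Formula Ag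
  | impl : Formula Ag → Formula Ag → Formula Ag
  | K    : Ag → Formula Ag → Formula Ag
  | F    : (G : Finset Ag) → G.Nonempty → Formula Ag → Formula Ag

/-- A similarity model `(W, A, E, C, ν)`. -/
structure SimModel (Ag : Type) where
  W : Type
  A : Type
  w_nonempty : Nonempty W
  E : W → W → Set A
  Cap : Ag → Set A
  val : W → Set ℕ
  positivity : ∀ s t : W, E s t = Set.univ → s = t
  symmetry : ∀ s t : W, E s t = E t s

/-- Satisfaction on similarity models. -/
def SimModel.sat {Ag : Type} (M : SimModel Ag) : M.W → Formula Ag → Prop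
  | s, .atom p => p ∈ M.val s
  | s, .neg φ => ¬ M.sat s φ
  | s, .impl φ ψ => M.sat s φ → M.sat s ψ
  | s, .K a φ => ∀ t, M.Cap a ⊆ M.E s t → M.sat t φ
  | s, .F G _ φ => ∀ t, (⋂ a ∈ G, M.Cap a) ⊆ M.E s t → M.sat t φ

namespace Formula
/-- Conjunction, defined from the primitive connectives. -/
def and {Ag : Type} (φ ψ : Formula Ag) : Formula Ag := .neg (φ.impl ψ.neg)
/-- A fixed tautology. -/
def top {Ag : Type} : Formula Ag := (atom 0).impl (atom 0)
/-- Biconditional, defined from the primitive connectives. -/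
def iff {Ag : Type} (φ ψ : Formula Ag) : Formula Ag := (φ.impl ψ).and (ψ.impl φ)
end Formula

/-- `φ` is a propositional tautology: it evaluates to `true` under every
assignment of truth values to formulas that respects negation and implication
(thereby treating atoms and modal formulas as propositional atoms). -/
def IsTautology {Ag : Type} (φ : Formula Ag) : Prop :=
  ∀ v : Formula Ag → Bool,
    (∀ ψ : Formula Ag, v ψ.neg = !v ψ) →
    (∀ ψ χ : Formula Ag, v (ψ.impl χ) = (!v ψ || v χ)) →
    v φ = true

/-- The axiomatic system ELF: the least set of formulas containing all propositional tautologies, closed under modus ponens, necessitation for each `K_a` and the rule NF, and containing the axiom schemes K, B, KF, F1, F2 and BF. -/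
inductive Prov {Ag : Type} : Formula Ag → Prop
  | taut {φ : Formula Ag} : IsTautology φ → Prov φ
  | mp {φ ψ : Formula Ag} : Prov (φ.impl ψ) → Prov φ → Prov ψ
  | nec {φ : Formula Ag} (a : Ag) : Prov φ → Prov (.K a φ)
  | kK {φ ψ : Formula Ag} (a : Ag) :
      Prov ((Formula.K a (φ.impl ψ)).impl ((Formula.K a φ).impl (.K a ψ)))
  | axB {φ : Formula Ag} (a : Ag) :
      Prov (φ.impl (.K a (Formula.neg (.K a φ.neg))))
  | kF {φ ψ : Formula Ag} (G : Finset Ag) (hG : G.Nonempty) :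
      Prov ((Formula.F G hG (φ.impl ψ)).impl ((Formula.F G hG φ).impl (.F G hG ψ)))
  | f1 {φ : Formula Ag} (a : Ag) :
      Prov ((Formula.F {a} (Finset.singleton_nonempty a) φ).iff (.K a φ))
  | f2 {φ : Formula Ag} (G H : Finset Ag) (hG : G.Nonempty) (hH : H.Nonempty)
      (hHG : H ⊆ G) : Prov ((Formula.F G hG φ).impl (.F H hH φ))
  | bf {φ : Formula Ag} (G : Finset Ag) (hG : G.Nonempty) :
      Prov (φ.impl (.F G hG (Formula.neg (.F G hG φ.neg))))
  | nf {φ : Formula Ag} (G : Finset Ag) (hG : G.Nonempty) :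
      Prov φ → Prov (.F G hG φ)

/-!
Henkin construction with finite sets of agents as epistemic abilities. Give agent `a` the
abilities `{H | a ∈ H}`, and let `H` belong to `E s t` when `H` is nonempty and the canonical
relation of `F_H` holds from `s` to `t`. The abilities common to `G` are then the supersets of `G`,
and by axiom F2 they all lie in `E s t` exactly when `G` itself does, so `F_G` is interpreted by
its own canonical relation. Axiom BF makes `E` symmetric, and positivity costs nothing because `∅`
is never in `E s t`.
-/

variable {Ag : Type}

namespace Formula

/-- The conjunction `ψ₁ ∧ (… ∧ (ψₙ ∧ ⊤))` of a list of formulas, in the form in which finite sets of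
premises enter `Φ ⊢ φ`. -/
abbrev conj (L : List (Formula Ag)) : Formula Ag := L.foldr and top

theorem eval_conj_eq_true_iff {v : Formula Ag → Bool} (hneg : ∀ ψ : Formula Ag, v ψ.neg = !v ψ)
    (himpl : ∀ ψ χ : Formula Ag, v (ψ.impl χ) = (!v ψ || v χ)) (L : List (Formula Ag)) :
    v (conj L) = true ↔ ∀ ψ ∈ L, v ψ = true := by
  induction L with
  | nil => simp [top, himpl]
  | cons φ L ih => simpa [and, hneg, himpl] using fun _ => ih

end Formula

open Formula (conj)

namespace IsTautology

theorem impl_self (φ : Formula Ag) : IsTautology (φ.impl φ) :=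
  fun v _ himpl => by simp [himpl]

theorem impl_const (φ ψ : Formula Ag) : IsTautology (φ.impl (ψ.impl φ)) :=
  fun v _ himpl => by cases hφ : v φ <;> simp [himpl, hφ]

theorem impl_distrib (φ ψ χ : Formula Ag) :
    IsTautology ((φ.impl (ψ.impl χ)).impl ((φ.impl ψ).impl (φ.impl χ))) :=
  fun v _ himpl => by cases hφ : v φ <;> cases hψ : v ψ <;> simp [himpl, hφ, hψ]

theorem neg_impl_impl (φ ψ : Formula Ag) : IsTautology (φ.neg.impl (φ.impl ψ)) :=
  fun v hneg himpl => by cases hφ : v φ <;> simp [hneg, himpl, hφ]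

theorem impl_neg_impl_impl (φ ψ : Formula Ag) :
    IsTautology ((φ.impl ψ).impl ((φ.neg.impl ψ).impl ψ)) :=
  fun v hneg himpl => by cases hφ : v φ <;> cases hψ : v ψ <;> simp [hneg, himpl, hφ, hψ]

theorem conj_impl_of_mem {L : List (Formula Ag)} {φ : Formula Ag} (hφ : φ ∈ L) :
    IsTautology ((conj L).impl φ) := fun v hneg himpl => by
  have hconj := Formula.eval_conj_eq_true_iff hneg himpl L
  cases hv : v (conj L)
  · simp [himpl, hv]
  · simp [himpl, hconj.1 hv φ hφ]

theorem conj_impl_conj_of_subset {L L' : List (Formula Ag)} (hL : L' ⊆ L) :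
    IsTautology ((conj L).impl (conj L')) := fun v hneg himpl => by
  have hconj := Formula.eval_conj_eq_true_iff hneg himpl
  cases hv : v (conj L)
  · simp [himpl, hv]
  · simp [himpl, (hconj L').2 fun ψ hψ => (hconj L).1 hv ψ (hL hψ)]

end IsTautology

namespace Prov

theorem impl_mp {φ ψ χ : Formula Ag} (h : Prov (φ.impl (ψ.impl χ))) (h' : Prov (φ.impl ψ)) :
    Prov (φ.impl χ) :=
  .mp (.mp (.taut (.impl_distrib φ ψ χ)) h) h'

theorem impl_of_prov (φ : Formula Ag) {ψ : Formula Ag} (h : Prov ψ) : Prov (φ.impl ψ) :=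
  .mp (.taut (.impl_const ψ φ)) h

theorem impl_trans {φ ψ χ : Formula Ag} (h : Prov (φ.impl ψ)) (h' : Prov (ψ.impl χ)) :
    Prov (φ.impl χ) :=
  (h'.impl_of_prov φ).impl_mp h

end Prov

/-- Derivability of a formula from premises in `Γ` and theorems of ELF by modus ponens. The
necessitation rules apply to theorems only, so that the deduction theorem holds. -/
inductive Derivable (Γ : Set (Formula Ag)) : Formula Ag → Prop
  | mem {φ : Formula Ag} : φ ∈ Γ → Derivable Γ φ
  | prov {φ : Formula Ag} : Prov φ → Derivable Γ φ
  | mp {φ ψ : Formula Ag} : Derivable Γ (φ.impl ψ) → Derivable Γ φ → Derivable Γ ψ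

namespace Derivable

variable {Γ Δ : Set (Formula Ag)} {φ ψ : Formula Ag}

theorem taut (h : IsTautology φ) : Derivable Γ φ :=
  .prov (.taut h)

theorem exists_prov_conj_impl (h : Derivable Γ φ) :
    ∃ L : List (Formula Ag), (∀ ψ ∈ L, ψ ∈ Γ) ∧ Prov ((conj L).impl φ) := by
  induction h with
  | @mem φ hφ =>
    exact ⟨[φ], by simpa using hφ, .taut (.conj_impl_of_mem (List.mem_singleton_self φ))⟩
  | prov hφ => exact ⟨[], by simp, hφ.impl_of_prov _⟩
  | mp _ _ ih_impl ih =>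
    obtain ⟨L₁, hL₁, h_impl⟩ := ih_impl
    obtain ⟨L₂, hL₂, h⟩ := ih
    have h_left : Prov ((conj (L₁ ++ L₂)).impl (conj L₁)) :=
      .taut (.conj_impl_conj_of_subset (List.subset_append_left L₁ L₂))
    have h_right : Prov ((conj (L₁ ++ L₂)).impl (conj L₂)) :=
      .taut (.conj_impl_conj_of_subset (List.subset_append_right L₁ L₂))
    exact ⟨L₁ ++ L₂, List.forall_mem_append.2 ⟨hL₁, hL₂⟩,
      (h_left.impl_trans h_impl).impl_mp (h_right.impl_trans h)⟩

theorem deduction (h : Derivable (insert ψ Γ) φ) : Derivable Γ (ψ.impl φ) := by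
  induction h with
  | mem hφ =>
    obtain rfl | hφ := hφ
    · exact taut (.impl_self _)
    · exact .mp (taut (.impl_const _ _)) (.mem hφ)
  | prov hφ => exact .prov (hφ.impl_of_prov ψ)
  | mp _ _ ih_impl ih => exact .mp (.mp (taut (.impl_distrib _ _ _)) ih_impl) ih

theorem mono (hΓΔ : Γ ⊆ Δ) (h : Derivable Γ φ) : Derivable Δ φ := by
  induction h with
  | mem hφ => exact .mem (hΓΔ hφ)
  | prov hφ => exact .prov hφ
  | mp _ _ ih_impl ih => exact .mp ih_impl ih

theorem exists_mem_of_sUnion {c : Set (Set (Formula Ag))} (hc : DirectedOn (· ⊆ ·) c)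
    (hne : c.Nonempty) (h : Derivable (⋃₀ c) φ) : ∃ Γ ∈ c, Derivable Γ φ := by
  induction h with
  | mem hφ =>
    obtain ⟨Γ, hΓ, hφΓ⟩ := hφ
    exact ⟨Γ, hΓ, .mem hφΓ⟩
  | prov hφ => exact hne.imp fun Γ hΓ => ⟨hΓ, .prov hφ⟩
  | mp _ _ ih_impl ih =>
    obtain ⟨Γ₁, hΓ₁, h_impl⟩ := ih_impl
    obtain ⟨Γ₂, hΓ₂, h⟩ := ih
    obtain ⟨Γ, hΓ, h₁, h₂⟩ := hc Γ₁ hΓ₁ Γ₂ hΓ₂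
    exact ⟨Γ, hΓ, .mp (h_impl.mono h₁) (h.mono h₂)⟩

end Derivable

/-- Maximal consistent sets, encoded as the deductively closed sets that contain exactly one of `φ`
and `¬φ` for every formula `φ`. -/
structure IsMaxConsistent (Γ : Set (Formula Ag)) : Prop where
  mem_of_derivable {φ : Formula Ag} : Derivable Γ φ → φ ∈ Γ
  neg_mem_iff {φ : Formula Ag} : φ.neg ∈ Γ ↔ φ ∉ Γ

namespace IsMaxConsistent

variable {Γ : Set (Formula Ag)} {φ ψ : Formula Ag}

theorem mem_of_prov (hΓ : IsMaxConsistent Γ) (h : Prov φ) : φ ∈ Γ :=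
  hΓ.mem_of_derivable (.prov h)

theorem mem_of_impl_mem (hΓ : IsMaxConsistent Γ) (h : φ.impl ψ ∈ Γ) (hφ : φ ∈ Γ) : ψ ∈ Γ :=
  hΓ.mem_of_derivable (.mp (.mem h) (.mem hφ))

theorem mem_of_prov_impl (hΓ : IsMaxConsistent Γ) (h : Prov (φ.impl ψ)) (hφ : φ ∈ Γ) : ψ ∈ Γ :=
  hΓ.mem_of_impl_mem (hΓ.mem_of_prov h) hφ

theorem impl_mem_iff (hΓ : IsMaxConsistent Γ) : φ.impl ψ ∈ Γ ↔ (φ ∈ Γ → ψ ∈ Γ) := by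
  refine ⟨hΓ.mem_of_impl_mem, fun h => ?_⟩
  by_cases hφ : φ ∈ Γ
  · exact hΓ.mem_of_prov_impl (.taut (.impl_const ψ φ)) (h hφ)
  · exact hΓ.mem_of_prov_impl (.taut (.neg_impl_impl φ ψ)) (hΓ.neg_mem_iff.2 hφ)

theorem and_mem_iff (hΓ : IsMaxConsistent Γ) : φ.and ψ ∈ Γ ↔ φ ∈ Γ ∧ ψ ∈ Γ := by
  simp [Formula.and, hΓ.neg_mem_iff, hΓ.impl_mem_iff]

theorem iff_mem_iff (hΓ : IsMaxConsistent Γ) : φ.iff ψ ∈ Γ ↔ (φ ∈ Γ ↔ ψ ∈ Γ) := by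
  simp only [Formula.iff, hΓ.and_mem_iff, hΓ.impl_mem_iff, iff_iff_implies_and_implies]

theorem F_singleton_mem_iff (hΓ : IsMaxConsistent Γ) (a : Ag) :
    .F {a} (Finset.singleton_nonempty a) φ ∈ Γ ↔ .K a φ ∈ Γ :=
  hΓ.iff_mem_iff.1 (hΓ.mem_of_prov (.f1 a))

theorem F_mem_of_derivable (hΓ : IsMaxConsistent Γ) {G : Finset Ag} {hG : G.Nonempty}
    (h : Derivable {ψ | .F G hG ψ ∈ Γ} φ) : .F G hG φ ∈ Γ := by
  induction h with
  | mem hφ => exact hφ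
  | prov hφ => exact hΓ.mem_of_prov (.nf G hG hφ)
  | mp _ _ ih_impl ih => exact hΓ.mem_of_impl_mem (hΓ.mem_of_prov_impl (.kF G hG) ih_impl) ih

theorem of_maximal_not_derivable (h : Maximal (fun Δ => ¬ Derivable Δ φ) Γ) :
    IsMaxConsistent Γ := by
  have derivable_impl : ∀ {ψ}, ψ ∉ Γ → Derivable Γ (ψ.impl φ) := fun {ψ} hψ => by
    by_contra h_impl
    have h_insert : ¬ Derivable (insert ψ Γ) φ := fun hφ => h_impl hφ.deduction
    exact hψ (h.le_of_ge h_insert (Set.subset_insert ψ Γ) (Set.mem_insert ψ Γ))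
  refine ⟨fun {ψ} hψ => ?_, fun {ψ} => ⟨fun h_neg hψ => ?_, fun hψ => ?_⟩⟩
  · by_contra hψΓ
    exact h.prop (.mp (derivable_impl hψΓ) hψ)
  · exact h.prop (.mp (.mp (.taut (.neg_impl_impl ψ φ)) (.mem h_neg)) (.mem hψ))
  · by_contra h_neg
    exact h.prop (.mp (.mp (.taut (.impl_neg_impl_impl ψ φ)) (derivable_impl hψ))
      (derivable_impl h_neg))

end IsMaxConsistent

theorem exists_maximal_not_derivable {Γ : Set (Formula Ag)} {φ : Formula Ag}
    (h : ¬ Derivable Γ φ) : ∃ Δ, Γ ⊆ Δ ∧ Maximal (fun Δ => ¬ Derivable Δ φ) Δ := by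
  refine zorn_subset_nonempty {Δ | ¬ Derivable Δ φ} (fun c hc hchain hne => ?_) Γ h
  refine ⟨⋃₀ c, fun hφ => ?_, fun Δ => Set.subset_sUnion_of_mem⟩
  obtain ⟨Δ, hΔ, hφΔ⟩ := hφ.exists_mem_of_sUnion hchain.directedOn hne
  exact hc hΔ hφΔ

/-- The states of the canonical model: the maximal consistent sets of formulas. -/
abbrev CanonicalWorld (Ag : Type) : Type := {Γ : Set (Formula Ag) // IsMaxConsistent Γ}

theorem exists_canonicalWorld_of_not_derivable {Γ : Set (Formula Ag)} {φ : Formula Ag}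
    (h : ¬ Derivable Γ φ) : ∃ s : CanonicalWorld Ag, Γ ⊆ s.1 ∧ φ ∉ s.1 := by
  obtain ⟨Δ, hΓΔ, hΔ⟩ := exists_maximal_not_derivable h
  exact ⟨⟨Δ, .of_maximal_not_derivable hΔ⟩, hΓΔ, fun hφ => hΔ.prop (.mem hφ)⟩

/-- The canonical accessibility relation of the modality `F_G`. -/
def CanonicalRel (G : Finset Ag) (hG : G.Nonempty) (s t : CanonicalWorld Ag) : Prop :=
  ∀ ψ, .F G hG ψ ∈ s.1 → ψ ∈ t.1

theorem F_mem_iff_forall_canonicalRel {G : Finset Ag} {hG : G.Nonempty} {s : CanonicalWorld Ag}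
    {φ : Formula Ag} : .F G hG φ ∈ s.1 ↔ ∀ t, CanonicalRel G hG s t → φ ∈ t.1 := by
  refine ⟨fun h t hst => hst φ h, fun h => ?_⟩
  by_contra hF
  obtain ⟨t, hst, hφ⟩ := exists_canonicalWorld_of_not_derivable (mt s.2.F_mem_of_derivable hF)
  exact hφ (h t fun ψ hψ => hst hψ)

namespace CanonicalRel

variable {G H : Finset Ag} {hG : G.Nonempty} {hH : H.Nonempty} {s t : CanonicalWorld Ag}

theorem symm (h : CanonicalRel G hG s t) : CanonicalRel G hG t s := by
  intro ψ hψ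
  by_contra hψs
  have h_box : .F G hG (.neg (.F G hG ψ.neg.neg)) ∈ s.1 :=
    s.2.mem_of_prov_impl (.bf G hG) (s.2.neg_mem_iff.2 hψs)
  have h_not_box : .F G hG ψ.neg.neg ∉ t.1 := t.2.neg_mem_iff.1 (h _ h_box)
  refine h_not_box (F_mem_iff_forall_canonicalRel.2 fun u htu => ?_)
  simpa only [u.2.neg_mem_iff, not_not] using htu ψ hψ

theorem mono (hHG : H ⊆ G) (h : CanonicalRel H hH s t) : CanonicalRel G hG s t :=
  fun ψ hψ => h ψ (s.2.mem_of_prov_impl (.f2 G H hG hH hHG) hψ)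

end CanonicalRel

/-- The canonical similarity model, whose abilities are the finite sets of agents. The empty set is
an ability that no agent has and that lies in no `E s t`; it is there to ensure positivity. -/
def canonicalModel (Ag : Type) [Nonempty (CanonicalWorld Ag)] : SimModel Ag where
  W := CanonicalWorld Ag
  A := Finset Ag
  w_nonempty := inferInstance
  E s t := {H | ∃ hH : H.Nonempty, CanonicalRel H hH s t}
  Cap a := {H | a ∈ H}
  val s := {p | .atom p ∈ s.1}
  positivity s t h := by
    obtain ⟨h_empty, -⟩ := Set.eq_univ_iff_forall.1 h ∅
    exact absurd h_empty Finset.not_nonempty_empty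
  symmetry s t := Set.ext fun _ => exists_congr fun _ => ⟨.symm, .symm⟩

section CanonicalModel

variable [Nonempty (CanonicalWorld Ag)] {s t : CanonicalWorld Ag}

theorem iInter_Cap_subset_E_iff_canonicalRel {G : Finset Ag} (hG : G.Nonempty) :
    (⋂ a ∈ G, (canonicalModel Ag).Cap a) ⊆ (canonicalModel Ag).E s t ↔ CanonicalRel G hG s t := by
  refine ⟨fun h => ?_, fun hst H hH => ?_⟩
  · have hG_mem : G ∈ ⋂ a ∈ G, (canonicalModel Ag).Cap a := Set.mem_iInter₂.2 fun _ ha => ha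
    obtain ⟨_, hst⟩ := h hG_mem
    exact hst
  · have hGH : G ⊆ H := fun a ha => Set.mem_iInter₂.1 hH a ha
    exact ⟨hG.mono hGH, hst.mono hGH⟩

theorem Cap_subset_E_iff_canonicalRel (a : Ag) :
    (canonicalModel Ag).Cap a ⊆ (canonicalModel Ag).E s t ↔
      CanonicalRel {a} (Finset.singleton_nonempty a) s t := by
  rw [← iInter_Cap_subset_E_iff_canonicalRel, Finset.set_biInter_singleton]

theorem canonicalModel_sat_iff_mem {φ : Formula Ag} :
    (canonicalModel Ag).sat s φ ↔ φ ∈ s.1 := by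
  induction φ generalizing s with
  | atom p => exact Iff.rfl
  | neg φ ih => exact (not_congr ih).trans s.2.neg_mem_iff.symm
  | impl φ ψ ihφ ihψ => exact (imp_congr ihφ ihψ).trans s.2.impl_mem_iff.symm
  | K a φ ih =>
    rw [← s.2.F_singleton_mem_iff, F_mem_iff_forall_canonicalRel]
    exact forall_congr' fun t => imp_congr (Cap_subset_E_iff_canonicalRel a) ih
  | F G hG φ ih =>
    rw [F_mem_iff_forall_canonicalRel]
    exact forall_congr' fun t => imp_congr (iInter_Cap_subset_E_iff_canonicalRel hG) ih

end CanonicalModel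

theorem stmt_17_general (Φ : Set (Formula Ag)) (φ : Formula Ag)
    (h : ∀ (M : SimModel Ag) (s : M.W), (∀ ψ ∈ Φ, M.sat s ψ) → M.sat s φ) :
    ∃ L : List (Formula Ag), (∀ ψ ∈ L, ψ ∈ Φ) ∧
      Prov ((L.foldr Formula.and Formula.top).impl φ) := by
  suffices h_derivable : Derivable Φ φ from h_derivable.exists_prov_conj_impl
  by_contra h_not
  obtain ⟨s, hΦs, hφs⟩ := exists_canonicalWorld_of_not_derivable h_not
  have : Nonempty (CanonicalWorld Ag) := ⟨s⟩
  have h_sat : ∀ ψ ∈ Φ, (canonicalModel Ag).sat s ψ :=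
    fun ψ hψ => canonicalModel_sat_iff_mem.2 (hΦs hψ)
  exact hφs (canonicalModel_sat_iff_mem.1 (h (canonicalModel Ag) s h_sat))

/-- strong completeness of ELF: if `Φ` semantically entails
`φ` over similarity models, then some finite conjunction `ψ₁ ∧ … ∧ ψₙ` of
members of `Φ` is such that `(ψ₁ ∧ … ∧ ψₙ) → φ` is a theorem of ELF. -/
theorem stmt_17 {Ag : Type} [Fintype Ag] [Nonempty Ag]
    (Φ : Set (Formula Ag)) (φ : Formula Ag)
    (h : ∀ (M : SimModel Ag) (s : M.W), (∀ ψ ∈ Φ, M.sat s ψ) → M.sat s φ) :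
    ∃ L : List (Formula Ag), (∀ ψ ∈ L, ψ ∈ Φ) ∧
      Prov ((L.foldr Formula.and Formula.top).impl φ) :=
  stmt_17_general Φ φ h
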